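/- arXiv:2106.09808 — 4 statements merged into one kernel-verified Lean document; each statement's English description precedes it below -/
import Mathlib

section
/- Let A and U be nonempty sets with the discrete topology, let X ⊆ A^ℤ be a bilaterally-finite shift space, and let Ψ : X → U^ℤ be an injective extended sliding block code of finite degree. Then Ψ(X) is a closed subset of U^ℤ (hence a shift space over U) and the inverse map Ψ⁻¹ : Ψ(X) → X is continuous and shift-commuting; that is, Ψ : X → Ψ(X) is reversible. -/
open Filter Topology Set

namespace ShiftPaper

/-- The shift map `σ` on the full shift `A^ℤ`: `σ(x)_n = x_{n+1}`. -/
def shiftMap {A : Type*} (x : ℤ → A) : ℤ → A := fun n => x (n + 1)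

/-- The `n`-th iterate of the shift: `σ^n(x)_m = x_{m+n}` (for `n : ℤ`). -/
def shiftIter {A : Type*} (n : ℤ) (x : ℤ → A) : ℤ → A := fun m => x (m + n)

/-- A shift space: a nonempty closed shift-invariant subset of the full shift. -/
def IsShiftSpace {A : Type*} [TopologicalSpace A] (X : Set (ℤ → A)) : Prop :=
  X.Nonempty ∧ IsClosed X ∧ shiftMap '' X = X

/-- The cylinder in `X` determined by the finite set `s ⊆ ℤ` and the values of `h` on `s`:
`C_X(h) = X ∩ {x : x_i = h_i for all i ∈ s}`. -/
def cylX {A : Type*} (X : Set (ℤ → A)) (s : Finset ℤ) (h : ℤ → A) : Set (ℤ → A) :=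
  X ∩ {x | ∀ i ∈ s, x i = h i}

/-- A barrier on `X`: a partition of `X` all of whose members are nonempty cylinders in `X`. -/
def IsBarrier {A : Type*} (X : Set (ℤ → A)) (B : Set (Set (ℤ → A))) : Prop :=
  (∀ C ∈ B, C.Nonempty ∧ ∃ (s : Finset ℤ) (h : ℤ → A), C = cylX X s h) ∧
  (∀ x ∈ X, ∃! C, C ∈ B ∧ x ∈ C)

/-- `Ψ` is induced by the local rule `φ` on the barrier `B`:
`Ψ(x)_n = φ(C)` whenever `C ∈ B` contains `σ^n(x)`. -/
def InducedBy {A U : Type*} (X : Set (ℤ → A)) (Ψ : (ℤ → A) → ℤ → U)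
    (B : Set (Set (ℤ → A))) (φ : Set (ℤ → A) → U) : Prop :=
  ∀ x ∈ X, ∀ n : ℤ, ∀ C ∈ B, shiftIter n x ∈ C → Ψ x n = φ C

/-- `Ψ` is an extended sliding block code on `X`. -/
def IsESBC {A U : Type*} (X : Set (ℤ → A)) (Ψ : (ℤ → A) → ℤ → U) : Prop :=
  ∃ (B : Set (Set (ℤ → A))) (φ : Set (ℤ → A) → U), IsBarrier X B ∧ InducedBy X Ψ B φ

/-- `Ψ` is an extended sliding block code of finite degree: it is induced by a local rule `φ`
on a barrier `B` (so `B` is attached to `Ψ`) such that for each symbol `u` only finitely many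
members of `B` have `φ`-value (i.e. `Ψ₀`-value) `u`. -/
def IsFiniteDegreeESBC {A U : Type*} (X : Set (ℤ → A)) (Ψ : (ℤ → A) → ℤ → U) : Prop :=
  ∃ (B : Set (Set (ℤ → A))) (φ : Set (ℤ → A) → U), IsBarrier X B ∧ InducedBy X Ψ B φ ∧
    ∀ u : U, {C | C ∈ B ∧ φ C = u}.Finite

/-- The data produced by the crucial lemma for a distinguished sequence `x` with
`Ψ(x^k) → y`: a sequence of partial functions `h_ℓ` (with finite domains `s_ℓ`, each
extending the previous one) and a decreasing sequence `S_ℓ` of infinite subsets of `ℕ`,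
such that `x^k ∈ C_X(h_ℓ)` for `k ∈ S_ℓ` and `Ψ(z)|_{[-ℓ,ℓ]} = y|_{[-ℓ,ℓ]}` on `C_X(h_ℓ)`. -/
def AssocData {A U : Type*} (X : Set (ℤ → A)) (Ψ : (ℤ → A) → ℤ → U)
    (x : ℕ → ℤ → A) (y : ℤ → U)
    (s : ℕ → Finset ℤ) (h : ℕ → ℤ → A) (S : ℕ → Set ℕ) : Prop :=
  (∀ ℓ : ℕ, s ℓ ⊆ s (ℓ + 1)) ∧
  (∀ ℓ : ℕ, ∀ i ∈ s ℓ, h (ℓ + 1) i = h ℓ i) ∧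
  (∀ ℓ : ℕ, (S ℓ).Infinite) ∧
  (∀ ℓ : ℕ, S (ℓ + 1) ⊆ S ℓ) ∧
  (∀ ℓ : ℕ, ∀ k ∈ S ℓ, x k ∈ cylX X (s ℓ) (h ℓ)) ∧
  (∀ ℓ : ℕ, ∀ z ∈ cylX X (s ℓ) (h ℓ), ∀ j : ℤ, |j| ≤ (ℓ : ℤ) → Ψ z j = y j)

/-- The symbol `a` belongs to `L₁(X)`: it appears in some point of `X`. -/
def inLetter {A : Type*} (X : Set (ℤ → A)) (a : A) : Prop :=
  ∃ x ∈ X, ∃ i : ℤ, x i = a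

/-- The two-letter word `ab` belongs to the language `L(X)`. -/
def inLang2 {A : Type*} (X : Set (ℤ → A)) (a b : A) : Prop :=
  ∃ x ∈ X, ∃ i : ℤ, x i = a ∧ x (i + 1) = b

/-- `X` is right-finite: for each allowed symbol `a`, only finitely many `b` with `ab ∈ L(X)`. -/
def RightFinite {A : Type*} (X : Set (ℤ → A)) : Prop :=
  ∀ a : A, inLetter X a → {b : A | inLang2 X a b}.Finite

/-- `X` is left-finite: for each allowed symbol `a`, only finitely many `b` with `ba ∈ L(X)`. -/
def LeftFinite {A : Type*} (X : Set (ℤ → A)) : Prop :=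
  ∀ a : A, inLetter X a → {b : A | inLang2 X b a}.Finite

end ShiftPaper

open ShiftPaper

/-!
A cylinder that fixes at least one coordinate of a bilaterally-finite shift space is compact: only
finitely many symbols can occur at each distance from the fixed coordinate, so the cylinder lies in
a product of finite sets. A barrier containing the one cylinder without a fixed coordinate, the
whole space `X`, makes `Ψ` constant, so that `X` is a point when `Ψ` is injective. Hence every
member of the barrier is compact, and by finite degree so are the fibres of `Ψ₀`. These are the
preimages of the open sets `{y | y 0 = u}`, which cover `U^ℤ`, and a continuous injection for which
the members of an open cover have compact preimages is a closed embedding. Its inverse is then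
continuous on its closed range.
-/

namespace ShiftPaper

section Topology

open TopologicalSpace

theorem isClosedEmbedding_of_isOpenCover_of_isCompact_preimage {E Y κ : Type*}
    [TopologicalSpace E] [TopologicalSpace Y] [T2Space Y] {V : κ → Opens Y} (hV : IsOpenCover V)
    {f : E → Y} (hf : Continuous f) (hinj : Function.Injective f)
    (hK : ∀ k, IsCompact (f ⁻¹' V k)) : IsClosedEmbedding f := by
  refine (hV.isClosedEmbedding_iff_restrictPreimage hf).2 fun k => ?_
  have : CompactSpace (f ⁻¹' V k) := isCompact_iff_compactSpace.1 (hK k)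
  exact hf.restrictPreimage.isClosedEmbedding (hinj.restrictPreimage _)

theorem isClosedEmbedding_of_isCompact_fiber_apply {E ι : Type*} {U : ι → Type*}
    [TopologicalSpace E] [∀ j, TopologicalSpace (U j)] [∀ j, T2Space (U j)]
    {f : E → ∀ j, U j} (hf : Continuous f) (hinj : Function.Injective f) (i : ι)
    [DiscreteTopology (U i)] (hK : ∀ u, IsCompact {x | f x i = u}) : IsClosedEmbedding f := by
  have hcover : IsOpenCover fun u : U i =>
      (⟨Function.eval i ⁻¹' {u}, (isOpen_discrete _).preimage (continuous_apply i)⟩ :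
        Opens (∀ j, U j)) :=
    .of_sets _ (iUnion_eq_univ_iff.2 fun y => ⟨y i, rfl⟩)
  exact isClosedEmbedding_of_isOpenCover_of_isCompact_preimage hcover hf hinj hK

theorem continuousOn_image_of_leftInvOn {E Y : Type*} [TopologicalSpace E] [TopologicalSpace Y]
    {f : E → Y} {g : Y → E} {s : Set E} (hf : IsInducing (s.domRestrict f))
    (hg : LeftInvOn g f s) : ContinuousOn g (f '' s) := by
  rintro _ ⟨x, hx, rfl⟩
  have hmap : map (s.domRestrict f) (𝓝 ⟨x, hx⟩) = 𝓝[f '' s] f x :=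
    range_domRestrict f s ▸ hf.map_nhds_eq ⟨x, hx⟩
  have hval : g ∘ s.domRestrict f = Subtype.val := funext fun z => hg z.2
  rw [ContinuousWithinAt, hg hx, ← hmap, tendsto_map'_iff, hval]
  exact continuousAt_subtype_val

end Topology

section Shift

variable {A : Type*} {X : Set (ℤ → A)}

theorem shiftMap_injective : Function.Injective (shiftMap : (ℤ → A) → ℤ → A) := by
  intro x z hxz
  funext n
  simpa [shiftMap] using congrFun hxz (n - 1)

theorem shiftMap_mem_iff (hX : shiftMap '' X = X) {x : ℤ → A} : shiftMap x ∈ X ↔ x ∈ X := by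
  conv_lhs => rw [← hX]
  exact shiftMap_injective.mem_set_image

theorem shiftIter_zero (x : ℤ → A) : shiftIter 0 x = x := by
  funext k
  simp [shiftIter]

theorem shiftIter_one (x : ℤ → A) : shiftIter 1 x = shiftMap x := rfl

theorem shiftIter_shiftIter (m n : ℤ) (x : ℤ → A) :
    shiftIter m (shiftIter n x) = shiftIter (m + n) x := by
  funext k
  simp [shiftIter, add_assoc]

theorem shiftMap_shiftIter (n : ℤ) (x : ℤ → A) :
    shiftMap (shiftIter n x) = shiftIter (n + 1) x := by
  rw [← shiftIter_one, shiftIter_shiftIter, add_comm]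

theorem mapsTo_shiftIter (hX : shiftMap '' X = X) (n : ℤ) : MapsTo (shiftIter n) X X := by
  intro x hx
  induction n with
  | zero => rwa [shiftIter_zero]
  | succ n ih => rwa [← shiftMap_shiftIter, shiftMap_mem_iff hX]
  | pred n ih => rwa [← shiftMap_mem_iff hX, shiftMap_shiftIter, sub_add_cancel]

theorem continuous_shiftIter [TopologicalSpace A] (n : ℤ) :
    Continuous (shiftIter n : (ℤ → A) → ℤ → A) :=
  continuous_pi fun k => continuous_apply (k + n)

theorem IsShiftSpace.image {U : Type*} [TopologicalSpace A] [TopologicalSpace U]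
    {Ψ : (ℤ → A) → ℤ → U} (hX : IsShiftSpace X)
    (hΨ : ∀ x ∈ X, Ψ (shiftMap x) = shiftMap (Ψ x)) (hcl : IsClosed (Ψ '' X)) :
    IsShiftSpace (Ψ '' X) := by
  obtain ⟨hne, -, hshift⟩ := hX
  refine ⟨hne.image Ψ, hcl, ?_⟩
  calc shiftMap '' (Ψ '' X) = Ψ '' (shiftMap '' X) := by
        simpa only [image_image] using image_congr fun x hx => (hΨ x hx).symm
    _ = Ψ '' X := by rw [hshift]

end Shift

section Cylinder

variable {A : Type*} {X : Set (ℤ → A)} {s : Finset ℤ} {h : ℤ → A}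

theorem cylX_subset : cylX X s h ⊆ X :=
  inter_subset_left

theorem cylX_empty : cylX X ∅ h = X := by
  simp [cylX]

theorem cylX_mem_nhdsWithin [TopologicalSpace A] [DiscreteTopology A] {x : ℤ → A}
    (hx : x ∈ cylX X s h) : cylX X s h ∈ 𝓝[X] x := by
  refine inter_mem_nhdsWithin X ((Finset.eventually_all s).2 fun i hi => ?_)
  exact (continuous_apply i).continuousAt.preimage_mem_nhds
    ((isOpen_discrete {h i}).mem_nhds (hx.2 i hi))

theorem isClosed_cylX [TopologicalSpace A] [T1Space A] (hX : IsClosed X) :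
    IsClosed (cylX X s h) := by
  refine hX.inter ?_
  simp only [ofPred_forall]
  exact isClosed_biInter fun i _ => isClosed_singleton.preimage (continuous_apply i)

theorem finite_eval_succ_image (hX : RightFinite X) {C : Set (ℤ → A)} (hC : C ⊆ X) {i : ℤ}
    (hi : (Function.eval i '' C).Finite) : (Function.eval (i + 1) '' C).Finite := by
  refine (hi.biUnion (t := fun a => {b | inLang2 X a b}) ?_).subset ?_
  · rintro _ ⟨x, hx, rfl⟩
    exact hX _ ⟨x, hC hx, i, rfl⟩
  · rintro _ ⟨x, hx, rfl⟩
    exact mem_biUnion (mem_image_of_mem _ hx) ⟨x, hC hx, i, rfl, rfl⟩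

theorem finite_eval_pred_image (hX : LeftFinite X) {C : Set (ℤ → A)} (hC : C ⊆ X) {i : ℤ}
    (hi : (Function.eval i '' C).Finite) : (Function.eval (i - 1) '' C).Finite := by
  refine (hi.biUnion (t := fun a => {b | inLang2 X b a}) ?_).subset ?_
  · rintro _ ⟨x, hx, rfl⟩
    exact hX _ ⟨x, hC hx, i, rfl⟩
  · rintro _ ⟨x, hx, rfl⟩
    exact mem_biUnion (mem_image_of_mem _ hx) ⟨x, hC hx, i - 1, rfl, by simp⟩

theorem finite_eval_image (hR : RightFinite X) (hL : LeftFinite X) {C : Set (ℤ → A)} (hC : C ⊆ X)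
    {i : ℤ} (hi : (Function.eval i '' C).Finite) (j : ℤ) : (Function.eval j '' C).Finite := by
  induction j using Int.inductionOn' (b := i) with
  | zero => exact hi
  | succ k _ ih => exact finite_eval_succ_image hR hC ih
  | pred k _ ih => exact finite_eval_pred_image hL hC ih

theorem isCompact_cylX [TopologicalSpace A] [T1Space A] (hX : IsClosed X) (hR : RightFinite X)
    (hL : LeftFinite X) (hs : s.Nonempty) : IsCompact (cylX X s h) := by
  obtain ⟨i, hi⟩ := hs
  have hfix : Function.eval i '' cylX X s h ⊆ {h i} := image_subset_iff.2 fun x hx => hx.2 i hi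
  have hfin := finite_eval_image hR hL cylX_subset ((finite_singleton _).subset hfix)
  exact (isCompact_univ_pi fun j => (hfin j).isCompact).of_isClosed_subset (isClosed_cylX hX)
    fun x hx j _ => mem_image_of_mem _ hx

end Cylinder

section BlockCode

variable {A U : Type*} {X : Set (ℤ → A)} {Ψ : (ℤ → A) → ℤ → U} {B : Set (Set (ℤ → A))}
  {φ : Set (ℤ → A) → U}

theorem IsBarrier.exists_mem (hB : IsBarrier X B) {x : ℤ → A} (hx : x ∈ X) :
    ∃ C ∈ B, x ∈ C := by
  obtain ⟨C, ⟨hC, hxC⟩, -⟩ := hB.2 x hx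
  exact ⟨C, hC, hxC⟩

theorem IsBarrier.subset_of_mem (hB : IsBarrier X B) {C : Set (ℤ → A)} (hC : C ∈ B) : C ⊆ X := by
  obtain ⟨-, s, h, rfl⟩ := hB.1 C hC
  exact cylX_subset

theorem IsBarrier.mem_nhdsWithin [TopologicalSpace A] [DiscreteTopology A] (hB : IsBarrier X B)
    {C : Set (ℤ → A)} (hC : C ∈ B) {x : ℤ → A} (hx : x ∈ C) : C ∈ 𝓝[X] x := by
  obtain ⟨-, s, h, rfl⟩ := hB.1 C hC
  exact cylX_mem_nhdsWithin hx

theorem InducedBy.apply_zero (hφ : InducedBy X Ψ B φ) (hB : IsBarrier X B) {C : Set (ℤ → A)}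
    (hC : C ∈ B) {x : ℤ → A} (hx : x ∈ C) : Ψ x 0 = φ C :=
  hφ x (hB.subset_of_mem hC hx) 0 C hC (by rwa [shiftIter_zero])

theorem InducedBy.inter_fiber_eq_biUnion (hφ : InducedBy X Ψ B φ) (hB : IsBarrier X B) (u : U) :
    X ∩ {x | Ψ x 0 = u} = ⋃ C ∈ {C | C ∈ B ∧ φ C = u}, C := by
  refine subset_antisymm ?_ (iUnion₂_subset ?_)
  · rintro x ⟨hx, rfl⟩
    obtain ⟨C, hC, hxC⟩ := hB.exists_mem hx
    exact mem_biUnion ⟨hC, (hφ.apply_zero hB hC hxC).symm⟩ hxC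
  · rintro C ⟨hC, rfl⟩ x hxC
    exact ⟨hB.subset_of_mem hC hxC, hφ.apply_zero hB hC hxC⟩

theorem InducedBy.apply_eq_of_mem (hφ : InducedBy X Ψ B φ) (hX : shiftMap '' X = X) (hXB : X ∈ B)
    {x : ℤ → A} (hx : x ∈ X) (n : ℤ) : Ψ x n = φ X :=
  hφ x hx n X hXB (mapsTo_shiftIter hX n hx)

theorem InducedBy.subsingleton_of_mem (hφ : InducedBy X Ψ B φ) (hX : shiftMap '' X = X)
    (hXB : X ∈ B) (hinj : InjOn Ψ X) : X.Subsingleton := by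
  refine fun x hx z hz => hinj hx hz (funext fun n => ?_)
  rw [hφ.apply_eq_of_mem hX hXB hx, hφ.apply_eq_of_mem hX hXB hz]

theorem InducedBy.isCompact_of_mem [TopologicalSpace A] [T1Space A] (hφ : InducedBy X Ψ B φ)
    (hB : IsBarrier X B) (hX : IsShiftSpace X) (hR : RightFinite X) (hL : LeftFinite X)
    (hinj : InjOn Ψ X) {C : Set (ℤ → A)} (hC : C ∈ B) : IsCompact C := by
  obtain ⟨-, hcl, hshift⟩ := hX
  obtain ⟨-, s, h, rfl⟩ := hB.1 C hC
  rcases s.eq_empty_or_nonempty with rfl | hs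
  · rw [cylX_empty] at hC ⊢
    exact (hφ.subsingleton_of_mem hshift hC hinj).finite.isCompact
  · exact isCompact_cylX hcl hR hL hs

theorem IsFiniteDegreeESBC.isESBC (hΨ : IsFiniteDegreeESBC X Ψ) : IsESBC X Ψ := by
  obtain ⟨B, φ, hB, hφ, -⟩ := hΨ
  exact ⟨B, φ, hB, hφ⟩

theorem IsFiniteDegreeESBC.isCompact_inter_fiber [TopologicalSpace A] [T1Space A]
    (hΨ : IsFiniteDegreeESBC X Ψ) (hX : IsShiftSpace X) (hR : RightFinite X) (hL : LeftFinite X)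
    (hinj : InjOn Ψ X) (u : U) : IsCompact (X ∩ {x | Ψ x 0 = u}) := by
  obtain ⟨B, φ, hB, hφ, hfin⟩ := hΨ
  rw [hφ.inter_fiber_eq_biUnion hB]
  exact (hfin u).isCompact_biUnion fun C hC => hφ.isCompact_of_mem hB hX hR hL hinj hC.1

theorem IsESBC.map_shiftIter (hΨ : IsESBC X Ψ) (hX : shiftMap '' X = X) {x : ℤ → A} (hx : x ∈ X)
    (m : ℤ) : Ψ (shiftIter m x) = shiftIter m (Ψ x) := by
  obtain ⟨B, φ, hB, hφ⟩ := hΨ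
  funext n
  obtain ⟨C, hC, hxC⟩ := hB.exists_mem (mapsTo_shiftIter hX (n + m) hx)
  calc Ψ (shiftIter m x) n = φ C :=
        hφ _ (mapsTo_shiftIter hX m hx) n C hC (by rwa [shiftIter_shiftIter])
    _ = Ψ x (n + m) := (hφ x hx (n + m) C hC hxC).symm

theorem IsESBC.map_shiftMap (hΨ : IsESBC X Ψ) (hX : shiftMap '' X = X) {x : ℤ → A} (hx : x ∈ X) :
    Ψ (shiftMap x) = shiftMap (Ψ x) :=
  hΨ.map_shiftIter hX hx 1

variable [TopologicalSpace A] [DiscreteTopology A] [TopologicalSpace U]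

theorem IsESBC.continuousOn_apply_zero (hΨ : IsESBC X Ψ) : ContinuousOn (fun x => Ψ x 0) X := by
  obtain ⟨B, φ, hB, hφ⟩ := hΨ
  intro x hx
  obtain ⟨C, hC, hxC⟩ := hB.exists_mem hx
  have hconst : (fun z => Ψ z 0) =ᶠ[𝓝[X] x] fun _ => φ C :=
    eventually_of_mem (hB.mem_nhdsWithin hC hxC) fun z hz => hφ.apply_zero hB hC hz
  exact continuousWithinAt_const.congr_of_eventuallyEq hconst (hφ.apply_zero hB hC hxC)

theorem IsESBC.continuousOn (hΨ : IsESBC X Ψ) (hX : shiftMap '' X = X) : ContinuousOn Ψ X := by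
  refine continuousOn_pi.2 fun n => ?_
  have hcomp : ContinuousOn (fun x => Ψ (shiftIter n x) 0) X :=
    hΨ.continuousOn_apply_zero.comp (continuous_shiftIter n).continuousOn (mapsTo_shiftIter hX n)
  refine hcomp.congr fun x hx => ?_
  simp [hΨ.map_shiftIter hX hx, shiftIter]

theorem IsFiniteDegreeESBC.isClosedEmbedding_domRestrict [DiscreteTopology U]
    (hΨ : IsFiniteDegreeESBC X Ψ) (hX : IsShiftSpace X) (hR : RightFinite X) (hL : LeftFinite X)
    (hinj : InjOn Ψ X) : IsClosedEmbedding (X.domRestrict Ψ) := by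
  have hcont : Continuous (X.domRestrict Ψ) := (hΨ.isESBC.continuousOn hX.2.2).domRestrict
  refine isClosedEmbedding_of_isCompact_fiber_apply hcont hinj.injective 0 fun u => ?_
  have hfiber := hΨ.isCompact_inter_fiber hX hR hL hinj u
  rwa [← Subtype.image_preimage_coe, ← Subtype.isCompact_iff] at hfiber

end BlockCode

end ShiftPaper

/-- an injective finite degree ESBC on a bilaterally-finite shift space has
closed image (hence the image is a shift space), and `Ψ : X → Ψ(X)` is reversible: the
inverse is continuous and shift-commuting. -/
theorem injective_reversible_of_bilaterally_finite
    {A U : Type*} [TopologicalSpace A] [DiscreteTopology A] [Nonempty A]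
    [TopologicalSpace U] [DiscreteTopology U] [Nonempty U]
    (X : Set (ℤ → A)) (hX : IsShiftSpace X)
    (hbf : RightFinite X ∧ LeftFinite X)
    (Ψ : (ℤ → A) → ℤ → U) (hΨ : IsFiniteDegreeESBC X Ψ)
    (hinj : Set.InjOn Ψ X) :
    IsClosed (Ψ '' X) ∧ IsShiftSpace (Ψ '' X) ∧
    ∃ Φ : (ℤ → U) → ℤ → A,
      (∀ x ∈ X, Φ (Ψ x) = x) ∧
      (∀ y ∈ Ψ '' X, Φ y ∈ X ∧ Ψ (Φ y) = y) ∧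
      ContinuousOn Φ (Ψ '' X) ∧
      (∀ y ∈ Ψ '' X, Φ (shiftMap y) = shiftMap (Φ y)) := by
  have hemb := hΨ.isClosedEmbedding_domRestrict hX hbf.1 hbf.2 hinj
  have hcl : IsClosed (Ψ '' X) := range_domRestrict Ψ X ▸ hemb.isClosed_range
  have hcomm : ∀ x ∈ X, Ψ (shiftMap x) = shiftMap (Ψ x) := fun x hx =>
    hΨ.isESBC.map_shiftMap hX.2.2 hx
  have hinv : LeftInvOn (Function.invFunOn Ψ X) Ψ X := hinj.leftInvOn_invFunOn
  refine ⟨hcl, hX.image hcomm hcl, Function.invFunOn Ψ X, hinv,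
    fun y hy => ⟨Function.invFunOn_mem hy, Function.invFunOn_eq hy⟩,
    continuousOn_image_of_leftInvOn hemb.isInducing hinv, ?_⟩
  rintro _ ⟨x, hx, rfl⟩
  rw [← hcomm x hx, hinv hx, hinv ((shiftMap_mem_iff hX.2.2).2 hx)]
end

section
/- Give ℕ the discrete topology and ℕ^ℤ the product topology, and define Ψ : ℕ^ℤ → ℕ^ℤ by Ψ(x)_j = x_{j − x_j} + x_{j + x_j} for all x ∈ ℕ^ℤ and j ∈ ℤ (indices computed in ℤ). Then: (1) Ψ is continuous and shift-commuting (Ψ ∘ σ = σ ∘ Ψ); (2) the constant sequence 1^ℤ (all coordinates equal to 1) has no preimage under Ψ, yet 1^ℤ lies in the closure of Ψ(ℕ^ℤ) in ℕ^ℤ; consequently Ψ(ℕ^ℤ) is not closed in ℕ^ℤ, so the image of Ψ is not a shift space. -/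
open Filter Topology Set

open ShiftPaper

/-- The map `Ψ(x)_j = x_{j - x_j} + x_{j + x_j}` on the full shift `ℕ^ℤ`. -/
def PsiPm (x : ℤ → ℕ) : ℤ → ℕ :=
  fun j => x (j - (x j : ℤ)) + x (j + (x j : ℤ))

/-!
A zero of `x` at `j` forces `Ψ(x)_j = 2 x_j = 0`, so if `Ψ(x)` has no zeros then neither does `x`,
and every entry of `Ψ(x)` is at least `2`. Nevertheless `Ψ` has dense range: a window filled with
the single value `2N + 1`, its width, sends the two look-ups made from inside it to the left and to
the right of the window, where the sequence can be chosen freely.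
-/

theorem continuous_apply_of_discreteTopology {X ι A : Type*} [TopologicalSpace X]
    [TopologicalSpace ι] [DiscreteTopology ι] [TopologicalSpace A] {f : X → ι → A} {g : X → ι}
    (hf : Continuous f) (hg : Continuous g) : Continuous fun a => f a (g a) :=
  have eval_continuous : Continuous fun p : (ι → A) × ι => p.1 p.2 :=
    continuous_prod_of_discrete_right.2 continuous_apply
  eval_continuous.comp (hf.prodMk hg)

theorem continuous_psiPm : Continuous PsiPm := by
  refine continuous_pi fun j => ?_
  have offset_continuous : Continuous fun x : ℤ → ℕ => (x j : ℤ) :=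
    continuous_of_discreteTopology.comp (continuous_apply j)
  exact (continuous_apply_of_discreteTopology continuous_id
    (continuous_const.sub offset_continuous)).add
    (continuous_apply_of_discreteTopology continuous_id (continuous_const.add offset_continuous))

theorem psiPm_shiftMap (x : ℤ → ℕ) : PsiPm (shiftMap x) = shiftMap (PsiPm x) := by
  funext j
  simp only [PsiPm, shiftMap, sub_add_eq_add_sub, add_right_comm]

theorem psiPm_apply_eq_zero {x : ℤ → ℕ} {j : ℤ} (hj : x j = 0) : PsiPm x j = 0 := by
  simp [PsiPm, hj]

theorem two_le_psiPm_apply {x : ℤ → ℕ} (hx : ∀ j, PsiPm x j ≠ 0) (j : ℤ) : 2 ≤ PsiPm x j := by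
  have one_le (i : ℤ) : 1 ≤ x i := Nat.one_le_iff_ne_zero.2 (mt psiPm_apply_eq_zero (hx i))
  exact add_le_add (one_le _) (one_le _)

/-- A sequence whose image under `Ψ` agrees with `y` on the window `[-N, N]`: the window carries the
value `2N + 1`, the block of `y` on `[-N, N]` is copied immediately to its right, and the entries to
its left are `0`. -/
def approxPreimage (y : ℤ → ℕ) (N : ℕ) (j : ℤ) : ℕ :=
  if j < -N then 0 else if j ≤ N then 2 * N + 1 else y (j - (2 * N + 1))

section ApproxPreimage

variable (y : ℤ → ℕ) {N : ℕ} {j : ℤ}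

theorem approxPreimage_of_lt (hj : j < -N) : approxPreimage y N j = 0 :=
  if_pos hj

theorem approxPreimage_of_abs_le (hj : |j| ≤ N) : approxPreimage y N j = 2 * N + 1 := by
  obtain ⟨hl, hr⟩ := abs_le.1 hj
  rw [approxPreimage, if_neg hl.not_gt, if_pos hr]

theorem approxPreimage_of_gt (hj : N < j) : approxPreimage y N j = y (j - (2 * N + 1)) := by
  rw [approxPreimage, if_neg (by lia), if_neg hj.not_ge]

theorem psiPm_approxPreimage (hj : |j| ≤ N) : PsiPm (approxPreimage y N) j = y j := by
  obtain ⟨hl, hr⟩ := abs_le.1 hj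
  have left : approxPreimage y N (j - (2 * N + 1)) = 0 := approxPreimage_of_lt y (by lia)
  have right : approxPreimage y N (j + (2 * N + 1)) = y j := by
    rw [approxPreimage_of_gt y (by lia), add_sub_cancel_right]
  rw [PsiPm, approxPreimage_of_abs_le y hj]
  push_cast
  rw [left, right, zero_add]

theorem tendsto_psiPm_approxPreimage :
    Tendsto (fun N => PsiPm (approxPreimage y N)) atTop (𝓝 y) := by
  refine tendsto_pi_nhds.2 fun j => tendsto_nhds_of_eventually_eq ?_
  filter_upwards [eventually_ge_atTop j.natAbs] with N hN
  have abs_le : |j| ≤ N := by rwa [Int.abs_eq_natAbs, Nat.cast_le]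
  exact psiPm_approxPreimage y abs_le

end ApproxPreimage

theorem denseRange_psiPm : DenseRange PsiPm := fun y =>
  mem_closure_of_tendsto (tendsto_psiPm_approxPreimage y) (.of_forall fun _ => mem_range_self _)

/-- the map `Ψ(x)_j = x_{j-x_j} + x_{j+x_j}` on `ℕ^ℤ` is continuous and
shift-commuting, the constant sequence `1^ℤ` has no `Ψ`-preimage yet lies in the closure
of the image of `Ψ`; consequently the image of `Ψ` is not closed, so it is not a
shift space. -/
theorem psiPm_image_not_closed :
    Continuous PsiPm ∧
    (∀ x : ℤ → ℕ, PsiPm (shiftMap x) = shiftMap (PsiPm x)) ∧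
    (¬ ∃ x : ℤ → ℕ, PsiPm x = fun _ => 1) ∧
    ((fun _ : ℤ => 1) ∈ closure (Set.range PsiPm)) ∧
    ¬ IsClosed (Set.range PsiPm) := by
  have no_preimage : ¬ ∃ x : ℤ → ℕ, PsiPm x = fun _ => 1 := by
    rintro ⟨x, hx⟩
    have two_le : 2 ≤ PsiPm x 0 := two_le_psiPm_apply (by simp [hx]) 0
    simp [hx] at two_le
  refine ⟨continuous_psiPm, psiPm_shiftMap, no_preimage, denseRange_psiPm _, fun closed => ?_⟩
  exact no_preimage (closed.closure_subset (denseRange_psiPm _))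
end

section
/- Give ℕ the discrete topology and ℕ^ℤ the product topology, and define Ψ : ℕ^ℤ → ℕ^ℤ by Ψ(x)_n = x_n + 2·x_{n+1} for all x ∈ ℕ^ℤ and n ∈ ℤ. Then Ψ is injective but not surjective, and Ψ is of finite degree: there is a barrier B on ℕ^ℤ attached to Ψ (namely, the partition of ℕ^ℤ by the cylinders determined by the coordinates at positions 0 and 1) such that for every y ∈ ℕ only finitely many members of B have Ψ₀-value y, where Ψ₀(x) = Ψ(x)_0 = x_0 + 2x_1. -/
open Filter Topology Set

open ShiftPaper

/-- The sliding block code `Ψ(x)_n = x_n + 2 x_{n+1}` on the full shift `ℕ^ℤ`. -/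
def PsiLin (x : ℤ → ℕ) : ℤ → ℕ := fun n => x n + 2 * x (n + 1)

/-- The partition of `ℕ^ℤ` by the cylinders determined by the coordinates at positions
`0` and `1`. -/
def coordBarrier : Set (Set (ℤ → ℕ)) :=
  {C | ∃ a b : ℕ, C = {x : ℤ → ℕ | x 0 = a ∧ x 1 = b}}

/-! The difference `d = x - x'` of two sequences with the same image satisfies
`d n = -2 * d (n + 1)`, so every entry of `d` is divisible by all powers of `2` and vanishes.
The constant sequence `1` has no preimage: `x n + 2 * x (n + 1) = 1` forces `x (n + 1) = 0` for
every `n`, so that `x 0 + 2 * x 1 = 0`. Finally, `x 0 + 2 * x 1 = u` bounds both coordinates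
by `u`. -/

section TwistedSum

variable {α : Type*}

theorem pow_dvd_of_forall_eq_mul_apply {M : Type*} [Monoid M] {c : M} {f : α → α} {d : α → M}
    (h : ∀ a, d a = c * d (f a)) (k : ℕ) (a : α) : c ^ k ∣ d a := by
  induction k generalizing a with
  | zero => simp
  | succ k ih =>
    rw [h a, pow_succ']
    exact mul_dvd_mul_left c (ih (f a))

theorem eq_zero_of_forall_eq_mul_apply {M : Type*} [CommMonoidWithZero M] [IsCancelMulZero M]
    [WfDvdMonoid M] {c : M} (hc : ¬IsUnit c) {f : α → α} {d : α → M}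
    (h : ∀ a, d a = c * d (f a)) : d = 0 := by
  funext a
  by_contra ha
  obtain ⟨k, hk⟩ := FiniteMultiplicity.of_not_isUnit hc ha
  exact hk (pow_dvd_of_forall_eq_mul_apply h (k + 1) a)

theorem injective_add_mul_apply {R : Type*} [CommRing R] [IsCancelMulZero R] [WfDvdMonoid R]
    {c : R} (hc : ¬IsUnit c) (f : α → α) :
    Function.Injective fun (x : α → R) a ↦ x a + c * x (f a) := by
  intro x x' hxx'
  have hdiff : ∀ a, (x - x') a = -c * (x - x') (f a) := fun a ↦ by
    simp only [Pi.sub_apply]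
    linear_combination congrFun hxx' a
  exact sub_eq_zero.mp
    (eq_zero_of_forall_eq_mul_apply (mt (IsUnit.neg_iff c).mp hc) hdiff)

end TwistedSum

theorem psiLin_injective : Function.Injective PsiLin := by
  intro x x' hxx'
  have hcode (n : ℤ) : (x n : ℤ) + 2 * x (n + 1) = x' n + 2 * x' (n + 1) :=
    mod_cast congrFun hxx' n
  have hcast : (fun n ↦ (x n : ℤ)) = fun n ↦ (x' n : ℤ) :=
    injective_add_mul_apply Int.prime_two.not_isUnit (· + 1) (funext hcode)
  exact funext fun n ↦ Int.ofNat_inj.mp (congrFun hcast n)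

theorem psiLin_ne_one (x : ℤ → ℕ) : PsiLin x ≠ 1 := by
  intro hx
  have hsum (n : ℤ) : x n + 2 * x (n + 1) = 1 := congrFun hx n
  have hzero (n : ℤ) : x n = 0 := by
    have hpred := hsum (n - 1)
    rw [sub_add_cancel] at hpred
    omega
  simpa [hzero] using hsum 0

theorem not_surjective_psiLin : ¬Function.Surjective PsiLin := fun hsurj ↦
  let ⟨x, hx⟩ := hsurj 1
  psiLin_ne_one x hx

namespace ShiftPaper

variable {A : Type*}

theorem cylX_eq_of_mem {X : Set (ℤ → A)} {s : Finset ℤ} {x h : ℤ → A} (hx : x ∈ cylX X s h) :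
    cylX X s h = cylX X s x := by
  ext z
  refine and_congr_right fun _ ↦ forall₂_congr fun i hi ↦ ?_
  rw [hx.2 i hi]

theorem isBarrier_image_cylX (X : Set (ℤ → A)) (s : Finset ℤ) : IsBarrier X (cylX X s '' X) := by
  have self_mem {x : ℤ → A} (hx : x ∈ X) : x ∈ cylX X s x := ⟨hx, fun _ _ ↦ rfl⟩
  refine ⟨?_, fun x hx ↦ ⟨cylX X s x, ⟨mem_image_of_mem _ hx, self_mem hx⟩, ?_⟩⟩
  · rintro _ ⟨x, hx, rfl⟩
    exact ⟨⟨x, self_mem hx⟩, s, x, rfl⟩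
  · rintro _ ⟨⟨h, -, rfl⟩, hxh⟩
    exact cylX_eq_of_mem hxh

end ShiftPaper

theorem coordBarrier_eq_image_cylX : coordBarrier = cylX univ {0, 1} '' univ := by
  have hcyl (h : ℤ → ℕ) : cylX univ {0, 1} h = {x | x 0 = h 0 ∧ x 1 = h 1} := by
    ext x
    simp [cylX]
  refine Subset.antisymm ?_ ?_
  · rintro _ ⟨a, b, rfl⟩
    exact ⟨fun n ↦ if n = 0 then a else b, mem_univ _, by simp [hcyl]⟩
  · rintro _ ⟨h, -, rfl⟩
    exact ⟨h 0, h 1, hcyl h⟩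

theorem isBarrier_coordBarrier : IsBarrier univ coordBarrier :=
  coordBarrier_eq_image_cylX ▸ isBarrier_image_cylX univ {0, 1}

theorem psiLin_zero_eq_of_mem_coordBarrier {C : Set (ℤ → ℕ)} (hC : C ∈ coordBarrier)
    {x x' : ℤ → ℕ} (hx : x ∈ C) (hx' : x' ∈ C) : PsiLin x 0 = PsiLin x' 0 := by
  obtain ⟨a, b, rfl⟩ := hC
  simp only [PsiLin, zero_add, hx.1, hx.2, hx'.1, hx'.2]

theorem finite_setOf_add_mul_eq {m : ℕ} (hm : m ≠ 0) (u : ℕ) :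
    {p : ℕ × ℕ | p.1 + m * p.2 = u}.Finite := by
  refine (finite_Iic (u, u)).subset ?_
  rintro ⟨a, b⟩ (rfl : a + m * b = u)
  exact ⟨Nat.le_add_right _ _,
    (Nat.le_mul_of_pos_left b (Nat.pos_of_ne_zero hm)).trans (Nat.le_add_left _ _)⟩

theorem finite_setOf_mem_coordBarrier_psiLin_zero_eq (u : ℕ) :
    {C | C ∈ coordBarrier ∧ ∃ x ∈ C, PsiLin x 0 = u}.Finite := by
  refine ((finite_setOf_add_mul_eq two_ne_zero u).image
    fun p ↦ {x : ℤ → ℕ | x 0 = p.1 ∧ x 1 = p.2}).subset ?_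
  rintro _ ⟨⟨a, b, rfl⟩, x, ⟨rfl, rfl⟩, hu⟩
  exact ⟨(x 0, x 1), hu, rfl⟩

/-- the map `Ψ(x)_n = x_n + 2 x_{n+1}` on `ℕ^ℤ` is injective but not
surjective, and it is of finite degree: the partition of `ℕ^ℤ` by the cylinders on
coordinates `0, 1` is a barrier attached to `Ψ` such that for every `y ∈ ℕ` only finitely
many members have `Ψ₀`-value `y`. -/
theorem psiLin_injective_not_surjective_finite_degree :
    Function.Injective PsiLin ∧
    ¬ Function.Surjective PsiLin ∧
    IsBarrier (Set.univ : Set (ℤ → ℕ)) coordBarrier ∧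
    (∀ C ∈ coordBarrier, ∀ x ∈ C, ∀ x' ∈ C, PsiLin x 0 = PsiLin x' 0) ∧
    (∀ u : ℕ, {C | C ∈ coordBarrier ∧ ∃ x ∈ C, PsiLin x 0 = u}.Finite) :=
  ⟨psiLin_injective, not_surjective_psiLin, isBarrier_coordBarrier,
    fun _ hC _ hx _ hx' ↦ psiLin_zero_eq_of_mem_coordBarrier hC hx hx',
    finite_setOf_mem_coordBarrier_psiLin_zero_eq⟩
end

section
/- Give ℕ the discrete topology and ℕ^ℤ the product topology, and define Ψ : ℕ^ℤ → ℕ^ℤ by Ψ(x)_n = x_n + 2·x_{n+1}. For every integer L ≥ 1 there exist x, x′ ∈ ℕ^ℤ with x_0 ≠ x′_0 such that Ψ(x)_k = Ψ(x′)_k for all integers k with −L ≤ k ≤ L. Consequently, the inverse of Ψ on its image is not a classical sliding block code: there do not exist m, n ∈ ℕ and a function φ defined on (m+n+1)-blocks such that, for all x ∈ ℕ^ℤ and i ∈ ℤ, x_i = φ(Ψ(x)_{i−m}, …, Ψ(x)_{i+n}). -/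
open Filter Topology Set

open ShiftPaper

/-! The powers `p_n = 2 ^ (N - n)` satisfy `p_n = 2 p_{n+1}` for `n < N`. Restricting `p` to the
even positions, or to the odd ones, leaves exactly one nonzero summand in `p_n + 2 p_{n+1}`, and
that summand equals `p_n`; so the two restrictions have the same image at every position below
`N`, although they differ at `0`. -/

/-- The code `x ↦ (x_n + a x_{n+1})_n` with coefficient `a`, generalizing `PsiLin` from `2` in `ℕ`
to any coefficient. -/
def twoTermCode {R : Type*} [Add R] [Mul R] (a : R) (x : ℤ → R) : ℤ → R :=
  fun n => x n + a * x (n + 1)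

/-- `φ` is a local rule for the inverse of `Ψ`: it computes `x_i` from the symbols of `Ψ x` at the
positions `i + w t`. The window `w` may be infinite; `w t = t - m` on `Fin (m + n + 1)` gives the
classical sliding block codes with memory `m` and anticipation `n`. -/
def IsInverseRule {A B ι : Type*} (Ψ : (ℤ → A) → ℤ → B) (w : ι → ℤ) (φ : (ι → B) → A) : Prop :=
  ∀ (x : ℤ → A) (i : ℤ), x i = φ fun t => Ψ x (i + w t)

theorem IsInverseRule.apply_eq_apply {A B ι : Type*} {Ψ : (ℤ → A) → ℤ → B} {w : ι → ℤ}
    {φ : (ι → B) → A} (hφ : IsInverseRule Ψ w φ) {x x' : ℤ → A} {i : ℤ}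
    (h : ∀ t, Ψ x (i + w t) = Ψ x' (i + w t)) : x i = x' i := by
  rw [hφ x i, hφ x' i, funext h]

theorem isInverseRule_block_iff {A B : Type*} {Ψ : (ℤ → A) → ℤ → B} {m n : ℕ}
    {φ : (Fin (m + n + 1) → B) → A} :
    IsInverseRule Ψ (fun t : Fin (m + n + 1) => (t : ℤ) - m) φ ↔
      ∀ (x : ℤ → A) (i : ℤ), x i = φ fun t => Ψ x (i - m + t) := by
  simp only [IsInverseRule, sub_add_eq_add_sub, add_sub_assoc]

theorem psiLin_eq_twoTermCode : PsiLin = twoTermCode 2 := rfl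

theorem twoTermCode_indicator {R : Type*} [NonUnitalNonAssocSemiring R] {a : R} {p : ℤ → R}
    {S : Set ℤ} {n : ℤ} (hS : n + 1 ∈ S ↔ n ∉ S) (hp : p n = a * p (n + 1)) :
    twoTermCode a (S.indicator p) n = p n := by
  by_cases hn : n ∈ S
  · have hn' : n + 1 ∉ S := fun h => hS.mp h hn
    simp [twoTermCode, hn, hn']
  · simp [twoTermCode, hn, hS.mpr hn, ← hp]

theorem pow_toNat_sub_eq_mul {M : Type*} [Monoid M] (a : M) {N n : ℤ} (h : n < N) :
    a ^ (N - n).toNat = a * a ^ (N - (n + 1)).toNat := by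
  rw [← pow_succ']
  congr 1
  omega

section NonNilpotent

variable {R : Type*} [Semiring R] {a : R}

theorem exists_ne_twoTermCode_eq_of_le (ha : ¬ IsNilpotent a) (L : ℤ) :
    ∃ x x' : ℤ → R, x 0 ≠ x' 0 ∧ ∀ k ≤ L, twoTermCode a x k = twoTermCode a x' k := by
  let p : ℤ → R := fun n => a ^ (L + 1 - n).toNat
  let evens : Set ℤ := {n | Even n}
  have p_zero_ne : p 0 ≠ 0 := fun h => ha ⟨_, h⟩
  refine ⟨evens.indicator p, evensᶜ.indicator p, by simpa [evens] using p_zero_ne, fun k hk => ?_⟩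
  have hp : p k = a * p (k + 1) := pow_toNat_sub_eq_mul a (Int.lt_add_one_of_le hk)
  have h_even : k + 1 ∈ evens ↔ k ∉ evens := Int.even_add_one
  have h_odd : k + 1 ∈ evensᶜ ↔ k ∉ evensᶜ := not_congr h_even
  rw [twoTermCode_indicator h_even hp, twoTermCode_indicator h_odd hp]

theorem not_isInverseRule_twoTermCode (ha : ¬ IsNilpotent a) {ι : Type*} {w : ι → ℤ}
    (hw : BddAbove (range w)) (φ : (ι → R) → R) : ¬ IsInverseRule (twoTermCode a) w φ := by
  intro hφ
  obtain ⟨L, hL⟩ := hw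
  obtain ⟨x, x', hne, heq⟩ := exists_ne_twoTermCode_eq_of_le ha L
  refine hne (hφ.apply_eq_apply fun t => heq _ ?_)
  simpa only [zero_add] using hL (mem_range_self t)

theorem psiLin_inverse_not_sliding_block_code_general (ha : ¬ IsNilpotent a) :
    (∀ L : ℤ, ∃ x x' : ℤ → R, x 0 ≠ x' 0 ∧
      ∀ k ≤ L, twoTermCode a x k = twoTermCode a x' k) ∧
    ∀ {ι : Type*} {w : ι → ℤ}, BddAbove (range w) →
      ∀ φ : (ι → R) → R, ¬ IsInverseRule (twoTermCode a) w φ :=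
  ⟨exists_ne_twoTermCode_eq_of_le ha, not_isInverseRule_twoTermCode ha⟩

end NonNilpotent

/-- for every `L ≥ 1` there are `x, x' ∈ ℕ^ℤ` with `x_0 ≠ x'_0` whose
`Ψ`-images agree on `[-L, L]`; consequently the inverse of `Ψ` on its image is not a
classical sliding block code. -/
theorem psiLin_inverse_not_sliding_block_code :
    (∀ L : ℤ, 1 ≤ L → ∃ x x' : ℤ → ℕ, x 0 ≠ x' 0 ∧
      ∀ k : ℤ, -L ≤ k → k ≤ L → PsiLin x k = PsiLin x' k) ∧
    ¬ ∃ (m n : ℕ) (φ : (Fin (m + n + 1) → ℕ) → ℕ),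
      ∀ (x : ℤ → ℕ) (i : ℤ),
        x i = φ (fun t => PsiLin x (i - (m : ℤ) + (t.val : ℤ))) := by
  rw [psiLin_eq_twoTermCode]
  obtain ⟨agree, no_rule⟩ :=
    psiLin_inverse_not_sliding_block_code_general (show ¬ IsNilpotent (2 : ℕ) by simp)
  refine ⟨fun L _ => ?_, fun ⟨m, n, φ, hφ⟩ => ?_⟩
  · obtain ⟨x, x', hne, heq⟩ := agree L
    exact ⟨x, x', hne, fun k _ hk => heq k hk⟩
  · exact no_rule (finite_range _).bddAbove φ (isInverseRule_block_iff.mpr hφ)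
end
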